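/- arXiv:2402.02412 — 4 statements merged into one kernel-verified Lean document; each statement's English description precedes it below -/
import Mathlib

section
/- Let G = (V, E) be a finite simple graph with V = {v_1, …, v_n}. For each i ∈ {1, …, n} let s_i = [0,1] × [2i−2, 2i−1], and for each edge {v_i, v_j} ∈ E with i < j let r_{i,j} = s_i ∪ ([0, n+1] × [2i−1, 2j−2]) ∪ s_j (a 3-shape). Then for every γ ∈ ℕ: G has a vertex cover of size at most γ if and only if the family {r_{i,j} : {v_i, v_j} ∈ E, i < j} admits a feasible stabbing set of cost at most γ. -/
structure Rect where
  xl : ℝ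
  xr : ℝ
  yb : ℝ
  yt : ℝ

namespace Rect
def width (R : Rect) : ℝ := R.xr - R.xl
def valid (R : Rect) : Prop := R.xl ≤ R.xr ∧ R.yb ≤ R.yt
def toSet (R : Rect) : Set (ℝ × ℝ) := Set.Icc R.xl R.xr ×ˢ Set.Icc R.yb R.yt
end Rect

structure Seg where
  x1 : ℝ
  x2 : ℝ
  y : ℝ

namespace Seg
def len (s : Seg) : ℝ := s.x2 - s.x1
def valid (s : Seg) : Prop := s.x1 ≤ s.x2
def stabsRect (s : Seg) (R : Rect) : Prop :=
  s.x1 ≤ R.xl ∧ R.xr ≤ s.x2 ∧ R.yb ≤ s.y ∧ s.y ≤ R.yt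
def stabsShape {k : ℕ} (s : Seg) (R : Fin k → Rect) : Prop :=
  ∃ i, s.stabsRect (R i)
end Seg

/-- `R 0, …, R (k-1)` (from bottom to top) form a `k`-shape: all rectangles are valid
(nonempty), and for consecutive rectangles the top edge of the lower one is contained in the
bottom edge of the upper one, or vice versa (they share their `y`-coordinate and one
`x`-interval contains the other). -/
def IsKShape {k : ℕ} (R : Fin k → Rect) : Prop :=
  (∀ i, (R i).valid) ∧
  ∀ (i : ℕ) (h : i + 1 < k),
    (R ⟨i, Nat.lt_of_succ_lt h⟩).yt = (R ⟨i + 1, h⟩).yb ∧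
    (Set.Icc (R ⟨i, Nat.lt_of_succ_lt h⟩).xl (R ⟨i, Nat.lt_of_succ_lt h⟩).xr ⊆
        Set.Icc (R ⟨i + 1, h⟩).xl (R ⟨i + 1, h⟩).xr ∨
      Set.Icc (R ⟨i + 1, h⟩).xl (R ⟨i + 1, h⟩).xr ⊆
        Set.Icc (R ⟨i, Nat.lt_of_succ_lt h⟩).xl (R ⟨i, Nat.lt_of_succ_lt h⟩).xr)

/-- Total cost (length) of a finite set of horizontal segments. -/
noncomputable def segCost (S : Finset Seg) : ℝ := ∑ s ∈ S, s.len

/-- The unit square `s_i = [0,1] × [2i−2, 2i−1]` (for the 1-based index `i`). -/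
noncomputable def sqRect (i : ℕ) : Rect := ⟨0, 1, 2 * (i : ℝ) - 2, 2 * (i : ℝ) - 1⟩

/-- The wide rectangle `[0, n+1] × [2i−1, 2j−2]` (for 1-based indices `i < j`). -/
noncomputable def wideRect (n i j : ℕ) : Rect := ⟨0, (n : ℝ) + 1, 2 * (i : ℝ) - 1, 2 * (j : ℝ) - 2⟩

/-- The 3-shape `r_{i,j} = s_i ∪ ([0,n+1] × [2i−1, 2j−2]) ∪ s_j` for an edge `{v_i, v_j}`
(1-based indices `i < j`). -/
noncomputable def edgeShape (n i j : ℕ) : Fin 3 → Rect := ![sqRect i, wideRect n i j, sqRect j]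

/-!
A vertex `v_i` is selected by stabbing its unit square `s_i`, at cost `1`. The squares have pairwise
disjoint heights, so each segment stabs at most one of them, and selecting `m` vertices costs at
least `m`. The wide middle rectangle of an edge shape costs at least `n + 1`, which is more than
selecting all `n` vertices; hence a stabbing set either stabs a square of every edge shape or is at
least as expensive as the trivial vertex cover.
-/

namespace Seg

theorem valid.len_nonneg {s : Seg} (hs : s.valid) : 0 ≤ s.len :=
  sub_nonneg.2 hs

theorem stabsRect.width_le_len {s : Seg} {R : Rect} (h : s.stabsRect R) : R.width ≤ s.len :=
  sub_le_sub h.2.1 h.1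

end Seg

namespace Rect

/-- The bottom edge of a rectangle, a cheapest segment stabbing it. -/
def bottomSeg (R : Rect) : Seg := ⟨R.xl, R.xr, R.yb⟩

theorem len_bottomSeg (R : Rect) : R.bottomSeg.len = R.width := rfl

theorem valid.bottomSeg_valid {R : Rect} (hR : R.valid) : R.bottomSeg.valid := hR.1

theorem valid.bottomSeg_stabsRect {R : Rect} (hR : R.valid) : R.bottomSeg.stabsRect R :=
  ⟨le_rfl, le_rfl, le_rfl, hR.2⟩

end Rect

theorem segCost_mono {S T : Finset Seg} (hT : ∀ s ∈ T, s.valid) (hST : S ⊆ T) :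
    segCost S ≤ segCost T :=
  Finset.sum_le_sum_of_subset_of_nonneg hST fun s hs _ ↦ (hT s hs).len_nonneg

theorem len_le_segCost {S : Finset Seg} (hS : ∀ s ∈ S, s.valid) {s : Seg} (hs : s ∈ S) :
    s.len ≤ segCost S :=
  Finset.single_le_sum (fun t ht ↦ (hS t ht).len_nonneg) hs

open Classical in
theorem segCost_image_bottomSeg_le {ι : Type*} {R : ι → Rect} {I : Finset ι}
    (hR : ∀ i ∈ I, (R i).valid) :
    segCost (I.image fun i ↦ (R i).bottomSeg) ≤ ∑ i ∈ I, (R i).width := by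
  simp only [← Rect.len_bottomSeg]
  refine Finset.sum_image_le_of_nonneg fun s hs ↦ ?_
  obtain ⟨i, hi, rfl⟩ := Finset.mem_image.1 hs
  exact (hR i hi).bottomSeg_valid.len_nonneg

theorem sum_width_le_segCost {ι : Type*} {R : ι → Rect} {I : Finset ι} {S : Finset Seg}
    (hS : ∀ s ∈ S, s.valid)
    (hdisj : (I : Set ι).PairwiseDisjoint fun i ↦ Set.Icc (R i).yb (R i).yt)
    (hstab : ∀ i ∈ I, ∃ s ∈ S, s.stabsRect (R i)) :
    ∑ i ∈ I, (R i).width ≤ segCost S := by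
  classical
  have : Nonempty Seg := ⟨⟨0, 0, 0⟩⟩
  choose! f hfS hf using hstab
  have hinj : Set.InjOn f I := fun i hi j hj hij ↦
    hdisj.elim_set hi hj (f i).y (hf i hi).2.2 (hij ▸ (hf j hj).2.2)
  calc
    ∑ i ∈ I, (R i).width ≤ ∑ i ∈ I, (f i).len :=
      Finset.sum_le_sum fun i hi ↦ (hf i hi).width_le_len
    _ = segCost (I.image f) := (Finset.sum_image hinj).symm
    _ ≤ segCost S := segCost_mono hS (Finset.image_subset_iff.2 hfS)

theorem width_sqRect (i : ℕ) : (sqRect i).width = 1 := by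
  simp [sqRect, Rect.width]

theorem valid_sqRect (i : ℕ) : (sqRect i).valid := by
  constructor <;> simp only [sqRect] <;> linarith

theorem width_wideRect (n i j : ℕ) : (wideRect n i j).width = n + 1 := by
  simp [wideRect, Rect.width]

theorem pairwise_disjoint_sqRect_heights :
    Pairwise fun i j : ℕ ↦
      Disjoint (Set.Icc (sqRect i).yb (sqRect i).yt) (Set.Icc (sqRect j).yb (sqRect j).yt) := by
  intro i j hij
  wlog hlt : i < j generalizing i j
  · exact (this hij.symm (hij.lt_or_gt.resolve_left hlt)).symm
  have hle : (i : ℝ) + 1 ≤ j := by exact_mod_cast hlt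
  refine Set.disjoint_left.2 fun y hi hj ↦ ?_
  simp only [sqRect, Set.mem_Icc] at hi hj
  linarith

theorem stabsShape_edgeShape_iff {s : Seg} {n i j : ℕ} :
    s.stabsShape (edgeShape n i j) ↔
      s.stabsRect (sqRect i) ∨ s.stabsRect (wideRect n i j) ∨ s.stabsRect (sqRect j) := by
  simp [Seg.stabsShape, edgeShape, Fin.exists_fin_succ]

/-- `S` is a feasible solution for the family `𝒦` of shapes. `Seg` does not enforce
`x1 ≤ x2`, so validity of the segments is a separate field. -/
structure IsStabbingSet {k : ℕ} (S : Finset Seg) (𝒦 : Set (Fin k → Rect)) : Prop where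
  valid : ∀ s ∈ S, s.valid
  exists_stabsShape : ∀ K ∈ 𝒦, ∃ s ∈ S, s.stabsShape K

section Reduction

variable {n : ℕ} {G : SimpleGraph (Fin n)} {S : Finset Seg}

/-- The family `{r_{i,j} : {v_i, v_j} ∈ E, i < j}` of the reduction, with the vertex `i : Fin n`
playing the role of `v_{i+1}`. -/
def edgeShapes (G : SimpleGraph (Fin n)) : Set (Fin 3 → Rect) :=
  {K | ∃ i j : Fin n, G.Adj i j ∧ i < j ∧ edgeShape n (i + 1) (j + 1) = K}

theorem isStabbingSet_edgeShapes_iff :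
    IsStabbingSet S (edgeShapes G) ↔
      (∀ s ∈ S, s.valid) ∧ ∀ i j : Fin n, G.Adj i j → i < j →
        ∃ s ∈ S, s.stabsShape (edgeShape n (i + 1) (j + 1)) := by
  constructor
  · exact fun h ↦ ⟨h.valid, fun i j hij hlt ↦ h.exists_stabsShape _ ⟨i, j, hij, hlt, rfl⟩⟩
  · rintro ⟨hval, hstab⟩
    exact ⟨hval, fun _ ⟨i, j, hij, hlt, hK⟩ ↦ hK ▸ hstab i j hij hlt⟩

theorem exists_isStabbingSet_of_isVertexCover {C : Finset (Fin n)} (hC : G.IsVertexCover C) :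
    ∃ S, IsStabbingSet S (edgeShapes G) ∧ segCost S ≤ C.card := by
  classical
  refine ⟨C.image fun i : Fin n ↦ (sqRect (i + 1)).bottomSeg,
    isStabbingSet_edgeShapes_iff.2 ⟨?_, ?_⟩, ?_⟩
  · exact Finset.forall_mem_image.2 fun i _ ↦ (valid_sqRect _).bottomSeg_valid
  · intro i j hij _
    simp only [stabsShape_edgeShape_iff]
    rcases hC hij with hi | hj
    · exact ⟨_, Finset.mem_image_of_mem _ hi, .inl (valid_sqRect _).bottomSeg_stabsRect⟩
    · exact ⟨_, Finset.mem_image_of_mem _ hj, .inr (.inr (valid_sqRect _).bottomSeg_stabsRect)⟩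
  · simpa [width_sqRect] using
      segCost_image_bottomSeg_le (I := C) fun i _ ↦ valid_sqRect ((i : ℕ) + 1)

open Classical in
/-- The vertices whose unit square is stabbed by a segment of `S`; for cheap stabbing sets they
form the vertex cover of the reduction. -/
noncomputable def stabbedVertices (n : ℕ) (S : Finset Seg) : Finset (Fin n) :=
  {i | ∃ s ∈ S, s.stabsRect (sqRect (i + 1))}

theorem mem_stabbedVertices {i : Fin n} :
    i ∈ stabbedVertices n S ↔ ∃ s ∈ S, s.stabsRect (sqRect (i + 1)) := by
  simp [stabbedVertices]

theorem card_stabbedVertices_le_segCost (hS : ∀ s ∈ S, s.valid) :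
    ((stabbedVertices n S).card : ℝ) ≤ segCost S := by
  have hdisj := pairwise_disjoint_sqRect_heights.comp_of_injective
    (Nat.succ_injective.comp (Fin.val_injective (n := n)))
  simpa [width_sqRect] using
    sum_width_le_segCost hS (hdisj.set_pairwise _) fun _ ↦ mem_stabbedVertices.1

theorem IsStabbingSet.isVertexCover_stabbedVertices (h : IsStabbingSet S (edgeShapes G))
    (hcost : segCost S < n + 1) : G.IsVertexCover (stabbedVertices n S) := by
  intro i j hij
  wlog hlt : i < j generalizing i j
  · exact (this hij.symm (hij.ne.lt_or_gt.resolve_left hlt)).symm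
  obtain ⟨s, hs, hstab⟩ := h.exists_stabsShape _ ⟨i, j, hij, hlt, rfl⟩
  have hnot_wide : ¬ s.stabsRect (wideRect n (i + 1) (j + 1)) := fun hwide ↦ by
    have hle := hwide.width_le_len.trans (len_le_segCost h.valid hs)
    rw [width_wideRect] at hle
    exact hcost.not_ge hle
  rcases stabsShape_edgeShape_iff.1 hstab with hi | hwide | hj
  · exact .inl (mem_stabbedVertices.2 ⟨s, hs, hi⟩)
  · exact absurd hwide hnot_wide
  · exact .inr (mem_stabbedVertices.2 ⟨s, hs, hj⟩)

theorem IsStabbingSet.exists_isVertexCover (h : IsStabbingSet S (edgeShapes G)) :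
    ∃ C : Finset (Fin n), G.IsVertexCover C ∧ C.card ≤ segCost S := by
  rcases lt_or_ge (segCost S) (n + 1) with hlt | hge
  · exact ⟨_, h.isVertexCover_stabbedVertices hlt, card_stabbedVertices_le_segCost h.valid⟩
  · refine ⟨Finset.univ, by simp, ?_⟩
    rw [Finset.card_fin]
    linarith

end Reduction

theorem vertexCover_iff_stabbing_general (n : ℕ) (G : SimpleGraph (Fin n)) (γ : ℝ) :
    (∃ C : Finset (Fin n), C.card ≤ γ ∧ G.IsVertexCover C) ↔
      ∃ S, IsStabbingSet S (edgeShapes G) ∧ segCost S ≤ γ := by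
  constructor
  · rintro ⟨C, hcard, hC⟩
    obtain ⟨S, hS, hcost⟩ := exists_isStabbingSet_of_isVertexCover hC
    exact ⟨S, hS, hcost.trans hcard⟩
  · rintro ⟨S, hS, hcost⟩
    obtain ⟨C, hC, hcard⟩ := hS.exists_isVertexCover
    exact ⟨C, hcard.trans hcost, hC⟩

/-- For a finite simple graph `G` on vertices `v_1, …, v_n` and every `γ : ℕ`,
`G` has a vertex cover of size at most `γ` iff the family of 3-shapes
`{r_{i,j} : {v_i, v_j} ∈ E, i < j}` admits a feasible stabbing set of cost at most `γ`. -/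
theorem vertexCover_iff_stabbing (n : ℕ) (G : SimpleGraph (Fin n)) (γ : ℕ) :
    (∃ C : Finset (Fin n), C.card ≤ γ ∧
        ∀ i j : Fin n, G.Adj i j → i ∈ C ∨ j ∈ C) ↔
    (∃ S : Finset Seg, (∀ s ∈ S, s.valid) ∧
        (∀ i j : Fin n, G.Adj i j → i < j →
          ∃ s ∈ S, s.stabsShape (edgeShape n ((i : ℕ) + 1) ((j : ℕ) + 1))) ∧
        segCost S ≤ γ) := by
  simpa [isStabbingSet_edgeShapes_iff, SimpleGraph.IsVertexCover, and_assoc] using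
    vertexCover_iff_stabbing_general n G γ
end

section
/- Let K = R_1 ∪ ⋯ ∪ R_k be a k-shape and let B be the smallest axis-aligned rectangle containing K. If a horizontal segment s = [x_1, x_2] × {y} stabs K, then the extended segment [x_1 − k·w_max(K), x_2 + k·w_max(K)] × {y} stabs B. In particular, if 0 < δ ≤ 1 and every rectangle of K satisfies w(R_i) ≥ δ·w_max(K), then the extended segment has length at most (1 + 2k/δ)·|s|. -/
/-! If the `x`-projections of two rectangles of width at most `w` meet, then their left ends, and
likewise their right ends, are at distance at most `w`. Following a path in the graph of meeting
projections, every rectangle of a connected family of `k` rectangles has its ends within `k * w` of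
those of the stabbed one. The stabbed rectangle is no wider than `s`, so `δ * w` is at most the
length of `s`. -/

section Walk

variable {V X : Type*} [PseudoMetricSpace X] {G : SimpleGraph V} {f : V → X} {w : ℝ}

theorem dist_le_walk_length_mul (hf : ∀ u v, G.Adj u v → dist (f u) (f v) ≤ w) {u v : V}
    (p : G.Walk u v) : dist (f u) (f v) ≤ p.length * w := by
  induction p with
  | nil => simp
  | @cons u v x huv p ih =>
    calc
      dist (f u) (f x) ≤ dist (f u) (f v) + dist (f v) (f x) := dist_triangle _ _ _
      _ ≤ w + p.length * w := add_le_add (hf u v huv) ih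
      _ = (p.cons huv).length * w := by rw [SimpleGraph.Walk.length_cons]; push_cast; ring

theorem dist_le_card_mul_of_preconnected [Fintype V] (hG : G.Preconnected) (hw : 0 ≤ w)
    (hf : ∀ u v, G.Adj u v → dist (f u) (f v) ≤ w) (u v : V) :
    dist (f u) (f v) ≤ Fintype.card V * w := by
  obtain ⟨p, hp⟩ := (hG u v).exists_isPath
  have hlen : (p.length : ℝ) ≤ Fintype.card V := mod_cast hp.length_lt.le
  exact (dist_le_walk_length_mul hf p).trans (by gcongr)

end Walk

namespace Rect

/-- The projection of a rectangle to the `x`-axis. -/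
def xProj (R : Rect) : Set ℝ := Set.Icc R.xl R.xr

section Overlap

variable {R S : Rect} {w : ℝ}

theorem dist_xl_le_of_xProj_inter_nonempty (h : (R.xProj ∩ S.xProj).Nonempty)
    (hR : R.width ≤ w) (hS : S.width ≤ w) : dist R.xl S.xl ≤ w := by
  obtain ⟨x, ⟨hRl, hRr⟩, hSl, hSr⟩ := h
  unfold width at hR hS
  rw [Real.dist_eq, abs_le]
  constructor <;> linarith

theorem dist_xr_le_of_xProj_inter_nonempty (h : (R.xProj ∩ S.xProj).Nonempty)
    (hR : R.width ≤ w) (hS : S.width ≤ w) : dist R.xr S.xr ≤ w := by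
  obtain ⟨x, ⟨hRl, hRr⟩, hSl, hSr⟩ := h
  unfold width at hR hS
  rw [Real.dist_eq, abs_le]
  constructor <;> linarith

end Overlap

section Family

variable {ι : Type*} {R : ι → Rect}

/-- The graph joining two rectangles of a family when their `x`-projections meet.
It records the horizontal part of the contacts in a `k`-shape. -/
def xOverlapGraph (R : ι → Rect) : SimpleGraph ι :=
  SimpleGraph.fromRel fun i j => ((R i).xProj ∩ (R j).xProj).Nonempty

theorem xProj_inter_nonempty_of_adj {i j : ι} (h : (xOverlapGraph R).Adj i j) :
    ((R i).xProj ∩ (R j).xProj).Nonempty := by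
  rw [xOverlapGraph, SimpleGraph.fromRel_adj, Set.inter_comm (R j).xProj, or_self] at h
  exact h.2

variable [Fintype ι] [Nonempty ι]

/-- `w_max`, the largest width of a rectangle in a finite nonempty family. -/
noncomputable def maxWidth (R : ι → Rect) : ℝ :=
  Finset.univ.sup' Finset.univ_nonempty fun i => (R i).width

/-- The smallest axis-aligned rectangle containing a finite nonempty family of (nonempty)
rectangles. -/
noncomputable def boundingBox (R : ι → Rect) : Rect where
  xl := Finset.univ.inf' Finset.univ_nonempty fun i => (R i).xl
  xr := Finset.univ.sup' Finset.univ_nonempty fun i => (R i).xr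
  yb := Finset.univ.inf' Finset.univ_nonempty fun i => (R i).yb
  yt := Finset.univ.sup' Finset.univ_nonempty fun i => (R i).yt

theorem width_le_maxWidth (R : ι → Rect) (i : ι) : (R i).width ≤ maxWidth R :=
  Finset.le_sup' (fun i => (R i).width) (Finset.mem_univ i)

theorem maxWidth_nonneg (hR : ∀ i, (R i).xl ≤ (R i).xr) : 0 ≤ maxWidth R :=
  (sub_nonneg.2 (hR (Classical.arbitrary ι))).trans (width_le_maxWidth R _)

theorem dist_xl_le_card_mul_maxWidth (hR : ∀ i, (R i).xl ≤ (R i).xr)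
    (hconn : (xOverlapGraph R).Preconnected) (i j : ι) :
    dist (R i).xl (R j).xl ≤ Fintype.card ι * maxWidth R :=
  dist_le_card_mul_of_preconnected (f := fun i => (R i).xl) hconn (maxWidth_nonneg hR)
    (fun u v huv => dist_xl_le_of_xProj_inter_nonempty (xProj_inter_nonempty_of_adj huv)
      (width_le_maxWidth R u) (width_le_maxWidth R v)) i j

theorem dist_xr_le_card_mul_maxWidth (hR : ∀ i, (R i).xl ≤ (R i).xr)
    (hconn : (xOverlapGraph R).Preconnected) (i j : ι) :
    dist (R i).xr (R j).xr ≤ Fintype.card ι * maxWidth R :=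
  dist_le_card_mul_of_preconnected (f := fun i => (R i).xr) hconn (maxWidth_nonneg hR)
    (fun u v huv => dist_xr_le_of_xProj_inter_nonempty (xProj_inter_nonempty_of_adj huv)
      (width_le_maxWidth R u) (width_le_maxWidth R v)) i j

end Family

end Rect

namespace Seg

/-- The segment prolonged by `r` on both sides. -/
def extend (s : Seg) (r : ℝ) : Seg := ⟨s.x1 - r, s.x2 + r, s.y⟩

theorem stabsRect.extend_stabsRect_boundingBox {ι : Type*} [Fintype ι] [Nonempty ι]
    {R : ι → Rect} {s : Seg} {i : ι} {r : ℝ} (h : s.stabsRect (R i))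
    (hxl : ∀ j, dist (R i).xl (R j).xl ≤ r) (hxr : ∀ j, dist (R i).xr (R j).xr ≤ r) :
    (s.extend r).stabsRect (Rect.boundingBox R) := by
  obtain ⟨hx1, hx2, hyb, hyt⟩ := h
  refine ⟨?_, ?_, ?_, ?_⟩
  · refine Finset.le_inf' Finset.univ_nonempty _ fun j _ => ?_
    exact (sub_le_sub_right hx1 r).trans (sub_le_of_abs_sub_le_right (hxl j))
  · refine Finset.sup'_le Finset.univ_nonempty _ fun j _ => ?_
    have hj : (R j).xr - (R i).xr ≤ r := (abs_sub_le_iff.1 (hxr j)).2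
    exact (sub_le_iff_le_add'.1 hj).trans (add_le_add_left hx2 r)
  · exact (Finset.inf'_le (fun j => (R j).yb) (Finset.mem_univ i)).trans hyb
  · exact hyt.trans (Finset.le_sup' (fun j => (R j).yt) (Finset.mem_univ i))

theorem len_extend_mul_le {s : Seg} {c w δ : ℝ} (hc : 0 ≤ c) (hδ : 0 < δ)
    (h : δ * w ≤ s.len) : (s.extend (c * w)).len ≤ (1 + 2 * c / δ) * s.len := by
  have hw : w ≤ s.len / δ := (le_div_iff₀' hδ).2 h
  calc
    (s.extend (c * w)).len = s.len + 2 * c * w := by simp only [len, extend]; ring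
    _ ≤ s.len + 2 * c * (s.len / δ) := by gcongr
    _ = (1 + 2 * c / δ) * s.len := by ring

end Seg

theorem IsKShape.xOverlapGraph_preconnected {k : ℕ} {R : Fin k → Rect} (hR : IsKShape R) :
    (Rect.xOverlapGraph R).Preconnected := by
  have hmeet (i : ℕ) (h : i + 1 < k) :
      ((R ⟨i, Nat.lt_of_succ_lt h⟩).xProj ∩ (R ⟨i + 1, h⟩).xProj).Nonempty := by
    rcases (hR.2 i h).2 with hsub | hsub
    · exact ⟨_, Set.left_mem_Icc.2 (hR.1 _).1, hsub (Set.left_mem_Icc.2 (hR.1 _).1)⟩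
    · exact ⟨_, hsub (Set.left_mem_Icc.2 (hR.1 _).1), Set.left_mem_Icc.2 (hR.1 _).1⟩
  refine (SimpleGraph.pathGraph_preconnected k).mono fun i j hij => ?_
  refine (SimpleGraph.fromRel_adj _ i j).2 ⟨hij.ne, ?_⟩
  obtain ⟨i, hi⟩ := i
  obtain ⟨j, hj⟩ := j
  rcases SimpleGraph.pathGraph_adj.1 hij with rfl | rfl
  · exact .inl (hmeet i hj)
  · exact .inr (hmeet j hi)

theorem extended_segment_stabs_boundingBox_general {ι : Type*} [Fintype ι] [Nonempty ι]
    {R : ι → Rect} (hR : ∀ i, (R i).xl ≤ (R i).xr) (hconn : (Rect.xOverlapGraph R).Preconnected)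
    {s : Seg} (hstab : ∃ i, s.stabsRect (R i)) :
    (s.extend (Fintype.card ι * Rect.maxWidth R)).stabsRect (Rect.boundingBox R) ∧
    ∀ δ : ℝ, 0 < δ → (∀ i, δ * Rect.maxWidth R ≤ (R i).width) →
      (s.extend (Fintype.card ι * Rect.maxWidth R)).len ≤
        (1 + 2 * Fintype.card ι / δ) * s.len := by
  obtain ⟨i, hi⟩ := hstab
  exact ⟨hi.extend_stabsRect_boundingBox (Rect.dist_xl_le_card_mul_maxWidth hR hconn i)
      (Rect.dist_xr_le_card_mul_maxWidth hR hconn i),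
    fun δ hδ hwidth => Seg.len_extend_mul_le (Nat.cast_nonneg _) hδ
      ((hwidth i).trans hi.width_le_len)⟩

/-- Let `K = R_1 ∪ ⋯ ∪ R_k` be a k-shape, `wmax = w_max(K)` and `B` the
smallest axis-aligned rectangle containing `K`. If a horizontal segment `s = [x_1,x_2] × {y}`
stabs `K`, then `[x_1 − k·wmax, x_2 + k·wmax] × {y}` stabs `B`; moreover, if `0 < δ ≤ 1` and
`w(R_i) ≥ δ·wmax` for every `i`, then the extended segment has length at most
`(1 + 2k/δ)·|s|`. -/
theorem extended_segment_stabs_boundingBox {k : ℕ} (hk : 0 < k)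
    (R : Fin k → Rect) (hR : IsKShape R)
    (wmax : ℝ)
    (hwmax : wmax = Finset.univ.sup' ⟨⟨0, hk⟩, Finset.mem_univ _⟩ (fun i => (R i).width))
    (B : Rect)
    (hB : B = ⟨Finset.univ.inf' ⟨⟨0, hk⟩, Finset.mem_univ _⟩ (fun i => (R i).xl),
               Finset.univ.sup' ⟨⟨0, hk⟩, Finset.mem_univ _⟩ (fun i => (R i).xr),
               Finset.univ.inf' ⟨⟨0, hk⟩, Finset.mem_univ _⟩ (fun i => (R i).yb),
               Finset.univ.sup' ⟨⟨0, hk⟩, Finset.mem_univ _⟩ (fun i => (R i).yt)⟩)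
    (s : Seg) (hs : s.valid) (hstab : s.stabsShape R) :
    (Seg.mk (s.x1 - k * wmax) (s.x2 + k * wmax) s.y).stabsRect B ∧
    (∀ δ : ℝ, 0 < δ → δ ≤ 1 → (∀ i, δ * wmax ≤ (R i).width) →
      (s.x2 + k * wmax) - (s.x1 - k * wmax) ≤ (1 + 2 * k / δ) * (s.x2 - s.x1)) := by
  have : Nonempty (Fin k) := ⟨⟨0, hk⟩⟩
  subst hwmax hB
  obtain ⟨hbox, hlen⟩ := extended_segment_stabs_boundingBox_general (fun i => (hR.1 i).1)
    hR.xOverlapGraph_preconnected hstab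
  rw [Fintype.card_fin] at hbox hlen
  exact ⟨hbox, fun δ hδ _ => hlen δ hδ⟩
end

section
/- Let w, μ > 0 and n a positive integer, and suppose N := wn/μ² is a positive integer. For z ∈ ℝ and reals x_1 ≤ x_2, let c_z(x_1, x_2) := #{t ∈ ℤ : z + t·(w/μ) ∈ [x_1 − w, x_2 + w]}. Then for all reals x_1 ≤ x_2 with ℓ := x_2 − x_1 ≥ μ/n, one has (1/N) · Σ_{i=0}^{N−1} c_{i·μ/n}(x_1, x_2) · min{ℓ, 2w} ≤ 8μℓ. -/
/-!
The offsets `iμ/n`, `i < N`, subdivide one period `w/μ = Nμ/n`, so the `N` shifted grids partition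
the single grid of spacing `d = μ/n`. Their counts therefore add up to the number of multiples of
`d` in `[x₁ - w, x₂ + w]`, which is at most `(ℓ + 2w) / d + 1`. With `m = min ℓ 2w` and
`M = max ℓ 2w` we have `ℓ + 2w = m + M` and `ℓ * 2w = m * M`, so if `d ≤ M` then
`(ℓ + 2w + d) * m ≤ 3 * M * m = 6wℓ`.
-/

section GridIndices

/-- The indices `t ∈ ℤ` of the points `z + t * s` of the grid with spacing `s` and offset `z` that
lie in `[a, b]`. The paper's `c_z(x₁, x₂)` is the cardinality of
`gridIndices (w / μ) z (x₁ - w) (x₂ + w)`. -/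
def gridIndices {K : Type*} [Ring K] [LE K] (s z a b : K) : Set ℤ :=
  {t : ℤ | a ≤ z + t * s ∧ z + t * s ≤ b}

theorem mem_gridIndices_natCast_mul {K : Type*} [Ring K] [LE K] {d z a b : K} {N i : ℕ} {t : ℤ} :
    t ∈ gridIndices (N * d) (z + i * d) a b ↔ t * N + i ∈ gridIndices d z a b := by
  have h : z + i * d + t * (N * d) = z + ((t * N + i : ℤ) : K) * d := by
    push_cast
    noncomm_ring
  simp only [gridIndices, Set.mem_ofPred_eq, h]

variable {K : Type*} [Field K] [LinearOrder K] [IsStrictOrderedRing K] [FloorRing K] {d : K}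

theorem gridIndices_eq_Icc (hd : 0 < d) (z a b : K) :
    gridIndices d z a b = Set.Icc ⌈(a - z) / d⌉ ⌊(b - z) / d⌋ := by
  ext t
  simp only [gridIndices, Set.mem_ofPred_eq, Set.mem_Icc, Int.ceil_le, Int.le_floor,
    div_le_iff₀ hd, le_div_iff₀ hd, sub_le_iff_le_add', le_sub_iff_add_le']

theorem finite_gridIndices (hd : 0 < d) (z a b : K) : (gridIndices d z a b).Finite :=
  gridIndices_eq_Icc hd z a b ▸ Set.finite_Icc _ _

theorem card_gridIndices_le (hd : 0 < d) (z : K) {a b : K} (hab : a ≤ b) :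
    (Nat.card (gridIndices d z a b) : K) ≤ (b - a) / d + 1 := by
  have hcard : (Nat.card (gridIndices d z a b) : ℤ) =
      max (⌊(b - z) / d⌋ + 1 - ⌈(a - z) / d⌉) 0 := by
    rw [gridIndices_eq_Icc hd, ← Finset.coe_Icc, Nat.card_coe_set_eq, Set.ncard_coe_finset,
      Int.card_Icc, Int.toNat_eq_max]
  have hlength : (b - a) / d = (b - z) / d - (a - z) / d := by ring
  have hnonneg : 0 ≤ (b - a) / d := div_nonneg (sub_nonneg.2 hab) hd.le
  rw [← Int.cast_natCast, hcard]
  push_cast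
  refine max_le ?_ (by linarith)
  linarith [Int.floor_le ((b - z) / d), Int.le_ceil ((a - z) / d)]

theorem sum_card_gridIndices (hd : 0 < d) (z a b : K) (N : ℕ) [NeZero N] :
    ∑ i ∈ Finset.range N, Nat.card (gridIndices (N * d) (z + i * d) a b) =
      Nat.card (gridIndices d z a b) := by
  have hNd : 0 < N * d := mul_pos (Nat.cast_pos.2 (NeZero.pos N)) hd
  have hfinite (i : Fin N) : Finite (gridIndices (N * d) (z + (i : ℕ) * d) a b) :=
    finite_gridIndices hNd _ a b
  let residueEquiv : (Σ i : Fin N, gridIndices (N * d) (z + (i : ℕ) * d) a b) ≃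
      gridIndices d z a b :=
    (Equiv.subtypeProdEquivSigmaSubtype _).symm.trans <|
      ((Equiv.prodComm _ _).trans (Int.divModEquiv N).symm).subtypeEquiv
        fun _ ↦ mem_gridIndices_natCast_mul
  rw [Finset.sum_range, ← Nat.card_sigma, Nat.card_congr residueEquiv]

theorem sum_card_gridIndices_le (hd : 0 < d) (z : K) {a b : K} (hab : a ≤ b) (N : ℕ) [NeZero N] :
    ∑ i ∈ Finset.range N, (Nat.card (gridIndices (N * d) (z + i * d) a b) : K) ≤
      (b - a) / d + 1 := by
  rw [← Nat.cast_sum, sum_card_gridIndices hd]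
  exact card_gridIndices_le hd z hab

end GridIndices

theorem add_add_mul_min_le {R : Type*} [CommRing R] [LinearOrder R] [IsStrictOrderedRing R]
    {x y d : R} (hx : 0 ≤ x) (hy : 0 ≤ y) (hd : d ≤ max x y) :
    (x + y + d) * min x y ≤ 3 * (x * y) :=
  calc (x + y + d) * min x y ≤ 3 * max x y * min x y := by
        refine mul_le_mul_of_nonneg_right ?_ (le_min hx hy)
        linarith [min_add_max x y, min_le_max (a := x) (b := y)]
    _ = 3 * (x * y) := by rw [mul_assoc, max_mul_min]

theorem average_strip_intersection_cost_general {K : Type*} [Field K] [LinearOrder K]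
    [IsStrictOrderedRing K] [FloorRing K] {w μ n x₁ x₂ : K} (hw : 0 < w) (hμ : 0 < μ) (hn : 0 < n)
    {N : ℕ} (hN : (N : K) = w * n / μ ^ 2) (hle : x₁ ≤ x₂)
    (hstep : μ / n ≤ max (x₂ - x₁) (2 * w)) :
    (1 / (N : K)) * ∑ i ∈ Finset.range N,
        (Nat.card (gridIndices (w / μ) (i * (μ / n)) (x₁ - w) (x₂ + w)) : K) *
          min (x₂ - x₁) (2 * w)
      ≤ 6 * μ * (x₂ - x₁) := by
  set d := μ / n with hd_def
  set ℓ := x₂ - x₁ with hℓ_def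
  have hd : 0 < d := div_pos hμ hn
  have hℓ : 0 ≤ ℓ := sub_nonneg.2 hle
  have hN_pos : (0 : K) < N := by rw [hN]; positivity
  have : NeZero N := ⟨(Nat.cast_pos.1 hN_pos).ne'⟩
  have hperiod : w / μ = N * d := by rw [hN, hd_def]; field_simp
  have hcount : ∑ i ∈ Finset.range N,
      (Nat.card (gridIndices (w / μ) (i * d) (x₁ - w) (x₂ + w)) : K) ≤ (ℓ + 2 * w + d) / d := by
    have hsum := sum_card_gridIndices_le hd 0 (show x₁ - w ≤ x₂ + w by linarith) N
    simp only [zero_add, ← hperiod] at hsum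
    refine hsum.trans_eq ?_
    rw [hℓ_def, add_div _ d, div_self hd.ne']
    ring
  rw [← Finset.sum_mul]
  calc _ ≤ 1 / (N : K) * ((ℓ + 2 * w + d) / d * min ℓ (2 * w)) := by gcongr
    _ = (ℓ + 2 * w + d) * min ℓ (2 * w) / (w / μ) := by rw [hperiod]; field_simp
    _ ≤ 3 * (ℓ * (2 * w)) / (w / μ) := by
        have hmin := add_add_mul_min_le hℓ (by positivity) hstep
        gcongr ?_ / _
    _ = 6 * μ * ℓ := by field_simp; ring

/-- Let `w, μ > 0`, `n` a positive integer and `N := wn/μ²` a positive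
integer. For an offset `z` let `c_z(x_1,x_2)` be the number of grid lines of the vertical
grid of spacing `w/μ` with offset `z` whose `x`-coordinate lies in `[x_1 − w, x_2 + w]`.
Then for all `x_1 ≤ x_2` with `ℓ := x_2 − x_1 ≥ μ/n`, the average over the `N` offsets
`z ∈ {0, μ/n, …, (N−1)μ/n}` of `c_z(x_1,x_2) · min{ℓ, 2w}` is at most `8μℓ`. -/
theorem average_strip_intersection_cost (w μ : ℝ) (hw : 0 < w) (hμ : 0 < μ)
    (n : ℕ) (hn : 0 < n) (N : ℕ) (hN : 0 < N) (hNdef : (N : ℝ) = w * n / μ ^ 2)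
    (x1 x2 : ℝ) (hle : x1 ≤ x2) (hlen : μ / n ≤ x2 - x1) :
    (1 / (N : ℝ)) * ∑ i ∈ Finset.range N,
        (Nat.card {t : ℤ | x1 - w ≤ (i : ℝ) * (μ / n) + (t : ℝ) * (w / μ) ∧
            (i : ℝ) * (μ / n) + (t : ℝ) * (w / μ) ≤ x2 + w} : ℝ) *
          min (x2 - x1) (2 * w)
      ≤ 8 * μ * (x2 - x1) := by
  have h : _ ≤ 6 * μ * (x2 - x1) := average_strip_intersection_cost_general hw hμ
    (Nat.cast_pos.2 hn) hNdef hle (hlen.trans (le_max_left _ _))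
  exact h.trans (mul_le_mul_of_nonneg_right (by linarith) (sub_nonneg.2 hle))
end

section
/- Let α ≥ 1 be a real, let ε be a real with 0 < ε < 1/2, and let j, d be integers with j ≤ d − 1 such that M := α·ε^{j−2}/ε^d is a positive integer. If r is chosen uniformly at random from the set {0, ε^d, 2ε^d, …, (M−1)·ε^d}, then for every fixed x_0 ∈ ℝ, the probability that some point of the grid {r + t·α·ε^{j−2} : t ∈ ℤ} lies within distance α·ε^{j−1} of x_0 is at most 3ε. -/
/-!
Measured in units of `δ = ε ^ d`, the possible grid points `k + t * M` with `0 ≤ k < M` and `t : ℤ`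
run through every integer exactly once. Hence the number of bad offsets is at most the number of
integers in an interval of length `2 * ε * M`, which is at most `2 * ε * M + 1`. Since the offsets
are at least as fine as the allowed distance, `1 ≤ ε * M`, and dividing by `M` leaves `3 * ε`.
-/

open scoped Classical in
theorem card_filter_bind_pure_of_injective.{u} {β γ : Type u} {f : β → γ} (hf : f.Injective)
    (s : Finset β) (p : γ → Prop) :
    ((s >>= fun b => pure (f b)).filter p).card = (s.filter fun b => p (f b)).card := by
  simp only [Finset.bind_def, Finset.pure_def, Finset.sup_singleton_apply, Finset.filter_image,
    Finset.card_image_of_injective _ hf]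

section FloorRing

variable {R : Type*} [Ring R] [LinearOrder R] [IsStrictOrderedRing R] [FloorRing R]

theorem card_Icc_ceil_floor_le {a b : R} (hab : a ≤ b + 1) :
    ((Finset.Icc ⌈a⌉ ⌊b⌋).card : R) ≤ b + 1 - a := by
  have hcard : ((Finset.Icc ⌈a⌉ ⌊b⌋).card : R) = max ((⌊b⌋ : R) + 1 - ⌈a⌉) 0 := by
    rw [Int.card_Icc, ← Int.cast_natCast, Int.toNat_eq_max]
    push_cast
    rfl
  rw [hcard]
  refine max_le ?_ (sub_nonneg.mpr hab)
  gcongr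
  · exact Int.floor_le b
  · exact Int.le_ceil a

end FloorRing

open scoped Classical in
theorem card_filter_range_exists_add_mul_mem_le (M : ℕ) (S : Finset ℤ) :
    ((Finset.range M).filter fun k : ℕ => ∃ t : ℤ, (k : ℤ) + t * M ∈ S).card ≤ S.card := by
  refine Finset.card_le_card_of_surjOn (fun n => (n % M).toNat) fun k hk => ?_
  obtain ⟨hkM, t, ht⟩ := Finset.mem_filter.mp hk
  have hmod : ((k : ℤ) + t * M) % M = k := by
    rw [Int.add_mul_emod_self_right]
    exact Int.emod_eq_of_lt (by positivity) (by exact_mod_cast Finset.mem_range.mp hkM)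
  exact ⟨k + t * M, ht, by simp only [hmod, Int.toNat_natCast]⟩

section FloorField

variable {K : Type*} [Field K] [LinearOrder K] [IsStrictOrderedRing K]

theorem abs_add_mul_sub_le_iff_mem_Icc_ceil_floor [FloorRing K] {δ : K} (hδ : 0 < δ)
    (k t m : ℤ) (x ρ : K) :
    |k * δ + t * (m * δ) - x| ≤ ρ ↔
      k + t * m ∈ Finset.Icc ⌈(x - ρ) / δ⌉ ⌊(x + ρ) / δ⌋ := by
  have hfactor : k * δ + t * (m * δ) = ((k + t * m : ℤ) : K) * δ := by push_cast; ring
  rw [hfactor, Finset.mem_Icc, Int.ceil_le, Int.le_floor, div_le_iff₀ hδ, le_div_iff₀ hδ,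
    abs_sub_le_iff, sub_le_iff_le_add', sub_le_comm, and_comm]

open scoped Classical in
theorem card_offsets_grid_near_le [FloorRing K] {δ ρ : K} (hδ : 0 < δ) (hρ : 0 ≤ ρ) (M : ℕ)
    (x : K) :
    (((Finset.range M).filter fun k : ℕ => ∃ t : ℤ, |k * δ + t * (M * δ) - x| ≤ ρ).card : K) ≤
      2 * ρ / δ + 1 := by
  have hiff (k : ℕ) (t : ℤ) : |k * δ + t * (M * δ) - x| ≤ ρ ↔
      (k : ℤ) + t * M ∈ Finset.Icc ⌈(x - ρ) / δ⌉ ⌊(x + ρ) / δ⌋ := by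
    exact_mod_cast abs_add_mul_sub_le_iff_mem_Icc_ceil_floor hδ k t M x ρ
  have hendpoints : (x - ρ) / δ ≤ (x + ρ) / δ := by gcongr; linarith
  simp only [hiff]
  calc (((Finset.range M).filter fun k : ℕ => ∃ t : ℤ,
          (k : ℤ) + t * M ∈ Finset.Icc ⌈(x - ρ) / δ⌉ ⌊(x + ρ) / δ⌋).card : K)
      ≤ (Finset.Icc ⌈(x - ρ) / δ⌉ ⌊(x + ρ) / δ⌋).card := by
        exact_mod_cast card_filter_range_exists_add_mul_mem_le M _
    _ ≤ (x + ρ) / δ + 1 - (x - ρ) / δ := card_Icc_ceil_floor_le (by linarith)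
    _ = 2 * ρ / δ + 1 := by ring

open scoped Classical in
theorem offsets_grid_near_probability_le [FloorRing K] {ε δ : K} (hδ : 0 < δ) {M : ℕ}
    (hεM : 1 ≤ ε * M) (x : K) :
    (((Finset.range M).filter fun k : ℕ => ∃ t : ℤ,
        |k * δ + t * (M * δ) - x| ≤ ε * (M * δ)).card : K) / M ≤ 3 * ε := by
  have hM : (0 : K) < M := Nat.cast_pos.mpr <| Nat.pos_of_ne_zero fun h => by
    simp [h, zero_lt_one.not_ge] at hεM
  have hρ : 0 ≤ ε * (M * δ) := by
    rw [← mul_assoc]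
    exact mul_nonneg (zero_le_one.trans hεM) hδ.le
  rw [div_le_iff₀ hM]
  calc _ ≤ 2 * (ε * (M * δ)) / δ + 1 := card_offsets_grid_near_le hδ hρ M x
    _ = 2 * (ε * M) + 1 := by field_simp
    _ ≤ 3 * ε * M := by linarith

theorem one_le_mul_natCast_of_eq_zpow_div {α ε : K} (hα : 1 ≤ α) (hε : 0 < ε) {j d : ℤ}
    (hjd : j ≤ d + 1) {M : ℕ} (hM : (M : K) = α * ε ^ (j - 2) / ε ^ d) : 1 ≤ ε * M := by
  have hMpos : (0 : K) < M := by rw [hM]; positivity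
  rcases le_total ε 1 with hε1 | hε1
  · have hεM : ε * M = α * ε ^ (j - 1 - d) := by
      rw [hM, mul_div_assoc, ← zpow_sub₀ hε.ne', mul_left_comm, ← zpow_one_add₀ hε.ne']
      congr 2
      ring
    rw [hεM]
    exact one_le_mul_of_one_le_of_one_le hα (one_le_zpow_of_nonpos₀ hε hε1 (by lia))
  · exact one_le_mul_of_one_le_of_one_le hε1 (Nat.one_le_cast.mpr (Nat.cast_pos.mp hMpos))

open scoped Classical in
theorem grid_near_point_probability_general [FloorRing K] {α ε : K} (hα : 1 ≤ α) (hε : 0 < ε)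
    {j d : ℤ} (hjd : j ≤ d + 1) {M : ℕ} (hM : (M : K) = α * ε ^ (j - 2) / ε ^ d) (x : K) :
    (((Finset.range M).filter fun k : ℕ => ∃ t : ℤ,
        |k * ε ^ d + t * (α * ε ^ (j - 2)) - x| ≤ α * ε ^ (j - 1)).card : K) / M ≤ 3 * ε := by
  have hspacing : α * ε ^ (j - 2) = M * ε ^ d := by rw [hM]; field_simp
  have hdistance : α * ε ^ (j - 1) = ε * (M * ε ^ d) := by
    rw [← hspacing, mul_left_comm, ← zpow_one_add₀ hε.ne']
    congr 2
    ring
  rw [hspacing, hdistance]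
  exact offsets_grid_near_probability_le (zpow_pos hε d)
    (one_le_mul_natCast_of_eq_zpow_div hα hε hjd hM) x

end FloorField

open scoped Classical in
/-- Let `α ≥ 1`, `0 < ε < 1/2`, and integers `j ≤ d − 1` such that
`M := α·ε^(j−2)/ε^d` is a positive integer. If the offset `r` is chosen uniformly at random
from `{0, ε^d, 2ε^d, …, (M−1)ε^d}`, then for every `x_0 ∈ ℝ` the probability that some point
of the grid `{r + t·α·ε^(j−2) : t ∈ ℤ}` lies within distance `α·ε^(j−1)` of `x_0` is at
most `3ε`. -/
theorem grid_near_point_probability (α ε : ℝ) (hα : 1 ≤ α) (hε0 : 0 < ε) (hε : ε < 1 / 2)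
    (j d : ℤ) (hjd : j ≤ d - 1) (M : ℕ) (hM : 0 < M)
    (hMdef : (M : ℝ) = α * ε ^ (j - 2) / ε ^ d) (x0 : ℝ) :
    (((Finset.range M).filter (fun i => ∃ t : ℤ,
        |(i : ℝ) * ε ^ d + (t : ℝ) * (α * ε ^ (j - 2)) - x0| ≤ α * ε ^ (j - 1))).card : ℝ)
        / (M : ℝ)
      ≤ 3 * ε := by
  -- The index `i` in the goal is real: `Finset.range M` is coerced to `Finset ℝ` through the monad
  -- structure of `Finset`.
  rw [card_filter_bind_pure_of_injective Nat.cast_injective]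
  exact grid_near_point_probability_general hα hε0 (by lia) hMdef x0
end
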